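/- Every holomorphic vector bundle on ℂP^1 splits as a direct sum of line bundles O(a_1) ⊕ ⋯ ⊕ O(a_r), and the integers a_1 ≥ ⋯ ≥ a_r are uniquely determined (Grothendieck–Birkhoff theorem). -/

import Mathlib

open Filter Topology

/-- The Laurent coefficients, about `0`, of a function on the punctured plane. -/
noncomputable def laurentCoeff {E : Type*} [NormedAddCommGroup E] [NormedSpace ℂ E]
    (φ : ℂ → E) (n : ℤ) : E :=
  (2 * Real.pi * Complex.I : ℂ)⁻¹ • ∮ ζ in C(0, 1), ζ ^ (-n - 1) • φ ζ

section Laurent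

variable {E : Type*} [NormedAddCommGroup E] [NormedSpace ℂ E]

theorem differentiableOn_zpow_smul {φ : ℂ → E} (hφ : DifferentiableOn ℂ φ {(0 : ℂ)}ᶜ) (k : ℤ) :
    DifferentiableOn ℂ (fun ζ => ζ ^ k • φ ζ) {(0 : ℂ)}ᶜ :=
  (differentiableOn_zpow k _ (Or.inl (by simp))).smul hφ

theorem circleIntegral_eq_of_differentiableOn_compl_zero {φ : ℂ → E}
    (hφ : DifferentiableOn ℂ φ {(0 : ℂ)}ᶜ) {r R : ℝ} (hr : 0 < r) (hR : 0 < R) :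
    ∮ ζ in C(0, R), φ ζ = ∮ ζ in C(0, r), φ ζ := by
  wlog h : r ≤ R generalizing r R
  · exact (this hR hr (le_of_not_ge h)).symm
  refine Complex.circleIntegral_eq_of_differentiable_on_annulus_off_countable hr h
    Set.countable_empty (hφ.continuousOn.mono ?_) fun z hz => ?_
  · rintro z ⟨-, hz⟩ rfl
    exact hz (Metric.mem_ball_self hr)
  · refine hφ.differentiableAt (isOpen_compl_singleton.mem_nhds ?_)
    rintro rfl
    exact hz.1.2 (Metric.mem_closedBall_self hr.le)

theorem laurentCoeff_eq {φ : ℂ → E} (hφ : DifferentiableOn ℂ φ {(0 : ℂ)}ᶜ) {R : ℝ} (hR : 0 < R)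
    (n : ℤ) :
    laurentCoeff φ n =
      (2 * Real.pi * Complex.I : ℂ)⁻¹ • ∮ ζ in C(0, R), ζ ^ (-n - 1) • φ ζ := by
  rw [laurentCoeff, circleIntegral_eq_of_differentiableOn_compl_zero
    (differentiableOn_zpow_smul hφ _) hR one_pos]

theorem norm_laurentCoeff_le {φ : ℂ → E} (hφ : DifferentiableOn ℂ φ {(0 : ℂ)}ᶜ) {R C : ℝ}
    (hR : 0 < R) (hC : ∀ z, ‖z‖ = R → ‖φ z‖ ≤ C) (n : ℤ) :
    ‖laurentCoeff φ n‖ ≤ C * R ^ (-n) := by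
  rw [laurentCoeff_eq hφ hR]
  refine (circleIntegral.norm_two_pi_i_inv_smul_integral_le_of_norm_le_const (C := R ^ (-n - 1) * C)
    hR.le fun z hz => ?_).trans_eq ?_
  · have hz' : ‖z‖ = R := by simpa using hz
    rw [norm_smul, norm_zpow, hz']
    exact mul_le_mul_of_nonneg_left (hC z hz') (by positivity)
  · rw [zpow_sub_one₀ hR.ne']
    field_simp

theorem hasSum_circleIntegral_inner {φ : ℂ → E} {r : ℝ} {z : ℂ} (hr : 0 < r)
    (hφ : CircleIntegrable φ 0 r) (hz : r < ‖z‖) :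
    HasSum (fun n : ℕ => ∮ ζ in C(0, r), (ζ / z) ^ n • z⁻¹ • φ ζ)
      (∮ ζ in C(0, r), (z - ζ)⁻¹ • φ ζ) := by
  have hz0 : 0 < ‖z‖ := hr.trans hz
  have hq : r / ‖z‖ ∈ Set.Ico (0 : ℝ) 1 := ⟨by positivity, (div_lt_one hz0).2 hz⟩
  refine intervalIntegral.hasSum_integral_of_dominated_convergence
    (fun n θ => r * ‖z‖⁻¹ * ‖φ (circleMap 0 r θ)‖ * (r / ‖z‖) ^ n) (fun n => ?_) (fun n => ?_)
    ?_ ?_ ?_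
  · simp only [deriv_circleMap]
    apply_rules [MeasureTheory.AEStronglyMeasurable.smul, hφ.def'.1] <;>
      apply Measurable.aestronglyMeasurable <;> fun_prop
  · refine Eventually.of_forall fun θ _ => le_of_eq ?_
    simp [norm_smul, abs_of_pos hr]
    ring
  · exact Eventually.of_forall fun _ _ => (summable_geometric_of_lt_one hq.1 hq.2).mul_left _
  · simp only [tsum_mul_left, tsum_geometric_of_lt_one hq.1 hq.2]
    exact (hφ.norm.const_mul _).mul_const _
  · refine Eventually.of_forall fun θ _ => HasSum.const_smul _ ?_
    simp only [smul_smul]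
    refine HasSum.smul_const ?_ _
    have : ‖circleMap 0 r θ / z‖ < 1 := by simpa [abs_of_pos hr] using hq.2
    have hz0' : z ≠ 0 := norm_pos_iff.1 hz0
    convert! (hasSum_geometric_of_norm_lt_one this).mul_right z⁻¹ using 1
    rw [← mul_inv, sub_mul, one_mul, div_mul_cancel₀ _ hz0']

theorem hasSum_laurentCoeff [CompleteSpace E] {φ : ℂ → E}
    (hφ : DifferentiableOn ℂ φ {(0 : ℂ)}ᶜ) {z : ℂ} (hz : z ≠ 0) :
    HasSum (fun n : ℤ => z ^ n • laurentCoeff φ n) (φ z) := by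
  have hz0 : 0 < ‖z‖ := norm_pos_iff.2 hz
  obtain ⟨r, hr, hrz⟩ := exists_between hz0
  obtain ⟨R, hRz⟩ := exists_gt ‖z‖
  have hR : 0 < R := hz0.trans hRz
  have hci : ∀ {ψ : ℂ → E} {ρ : ℝ}, 0 < ρ → DifferentiableOn ℂ ψ {(0 : ℂ)}ᶜ →
      CircleIntegrable ψ 0 ρ := fun {ψ ρ} hρ hψ =>
    (hψ.continuousOn.mono fun ζ hζ h0 => by
      rw [Set.mem_singleton_iff.1 h0] at hζ
      simp [hρ.ne] at hζ).circleIntegrable hρ.le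
  have houter := hasSum_two_pi_I_cauchyPowerSeries_integral (hci hR hφ) hRz
  have hinner := hasSum_circleIntegral_inner hr (hci hr hφ) hrz
  have hds : DifferentiableOn ℂ (dslope φ z) {(0 : ℂ)}ᶜ :=
    (Complex.differentiableOn_dslope (isOpen_compl_singleton.mem_nhds hz)).2 hφ
  have key : ∀ ρ : ℝ, 0 < ρ → ρ ≠ ‖z‖ → ∮ ζ in C(0, ρ), dslope φ z ζ =
      (∮ ζ in C(0, ρ), (ζ - z)⁻¹ • φ ζ) - (∮ ζ in C(0, ρ), (ζ - z)⁻¹ • φ z) := by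
    intro ρ hρ hne
    have hsub : ∀ ζ ∈ Metric.sphere (0 : ℂ) ρ, ζ - z ≠ 0 := fun ζ hζ h => by
      rw [sub_eq_zero.1 h] at hζ
      exact hne (by simpa using hζ.symm)
    have hinv : ContinuousOn (fun ζ : ℂ => (ζ - z)⁻¹) (Metric.sphere 0 ρ) :=
      (by fun_prop : ContinuousOn (fun ζ : ℂ => ζ - z) _).inv₀ hsub
    rw [← circleIntegral.integral_sub]
    · refine circleIntegral.integral_congr hρ.le fun ζ hζ => ?_
      have hζz : ζ ≠ z := sub_ne_zero.1 (hsub ζ hζ)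
      simp only [dslope_of_ne _ hζz, slope, vsub_eq_sub, smul_sub]
    · refine (hinv.smul (hφ.continuousOn.mono ?_)).circleIntegrable hρ.le
      intro ζ hζ h0
      rw [Set.mem_singleton_iff.1 h0] at hζ
      simp [hρ.ne] at hζ
    · exact (hinv.smul continuousOn_const).circleIntegrable hρ.le
  have hcauchy : (∮ ζ in C(0, R), (ζ - z)⁻¹ • φ ζ) + (∮ ζ in C(0, r), (z - ζ)⁻¹ • φ ζ) =
      (2 * Real.pi * Complex.I : ℂ) • φ z := by
    have h1 := circleIntegral_eq_of_differentiableOn_compl_zero hds hr hR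
    rw [key R hR hRz.ne', key r hr hrz.ne, circleIntegral.integral_smul_const,
      circleIntegral.integral_smul_const,
      circleIntegral.integral_sub_inv_of_mem_ball (by simpa using hRz)] at h1
    have h2 : (∮ ζ in C(0, r), (ζ - z)⁻¹) = 0 := by
      refine Complex.circleIntegral_eq_zero_of_differentiable_on_off_countable hr.le
        Set.countable_empty ?_ fun ζ hζ => ?_
      · refine (by fun_prop : ContinuousOn (fun ζ : ℂ => ζ - z) _).inv₀ fun ζ hζ h => ?_
        rw [sub_eq_zero.1 h] at hζ
        exact absurd (by simpa using hζ) hrz.not_ge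
      · refine DifferentiableAt.inv (by fun_prop) fun h => ?_
        rw [sub_eq_zero.1 h] at hζ
        exact absurd (by simpa using hζ.1) hrz.not_gt
    have h3 : (∮ ζ in C(0, r), (z - ζ)⁻¹ • φ ζ) = -∮ ζ in C(0, r), (ζ - z)⁻¹ • φ ζ := by
      rw [← neg_one_smul ℂ, ← circleIntegral.integral_smul]
      congr 1
      ext ζ
      rw [← neg_sub ζ z, inv_neg, neg_smul, neg_one_smul]
    rw [h2, zero_smul, sub_zero] at h1
    rw [h3, ← h1]
    abel
  have h2pi : (2 * Real.pi * Complex.I : ℂ) ≠ 0 := Complex.two_pi_I_ne_zero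
  have hterm : ∀ ρ : ℝ, 0 < ρ → ∀ n : ℤ, (2 * Real.pi * Complex.I : ℂ) • z ^ n • laurentCoeff φ n =
      ∮ ζ in C(0, ρ), z ^ n • ζ ^ (-n - 1) • φ ζ := fun ρ hρ n => by
    rw [laurentCoeff_eq hφ hρ, circleIntegral.integral_smul, smul_comm (z ^ n), smul_inv_smul₀ h2pi]
  simp only [zero_add, sub_zero] at houter
  suffices h : HasSum (fun n : ℤ => (2 * Real.pi * Complex.I : ℂ) • z ^ n • laurentCoeff φ n)
      ((2 * Real.pi * Complex.I : ℂ) • φ z) by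
    simpa only [inv_smul_smul₀ h2pi] using h.const_smul (2 * Real.pi * Complex.I : ℂ)⁻¹
  rw [← hcauchy]
  refine HasSum.of_nat_of_neg_add_one ?_ ?_
  · convert houter using 2 with n
    rw [hterm R hR]
    refine circleIntegral.integral_congr hR.le fun ζ hζ => ?_
    have hζ0 : ζ ≠ 0 := by
      rintro rfl
      simp [hR.ne] at hζ
    simp only [smul_smul]
    congr 1
    rw [zpow_sub_one₀ hζ0, zpow_neg, zpow_natCast, zpow_natCast, div_pow]
    ring
  · convert hinner using 2 with n
    rw [hterm r hr]
    refine circleIntegral.integral_congr hr.le fun ζ hζ => ?_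
    simp only [smul_smul]
    congr 1
    rw [neg_neg, add_sub_cancel_right, zpow_natCast, zpow_neg, ← Nat.cast_succ, zpow_natCast,
      pow_succ, div_pow, mul_inv]
    ring

end Laurent
theorem summable_half_pow_natAbs : Summable fun n : ℤ => (1 / 2 : ℝ) ^ n.natAbs := by
  refine Summable.of_nat_of_neg ?_ ?_ <;>
    simpa using summable_geometric_of_lt_one (by norm_num : (0 : ℝ) ≤ 2⁻¹) (by norm_num)

section Toeplitz

variable {E : Type*} [NormedAddCommGroup E] [NormedSpace ℂ E]

theorem norm_laurentCoeff_mul_zpow_le {φ : ℂ → E} (hφ : DifferentiableOn ℂ φ {(0 : ℂ)}ᶜ)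
    {R C : ℝ} (hR : 0 < R) (hC : ∀ z, ‖z‖ = 2 * R ∨ ‖z‖ = R / 2 → ‖φ z‖ ≤ C) (n : ℤ) :
    ‖laurentCoeff φ n‖ * R ^ n ≤ C * (1 / 2) ^ n.natAbs := by
  obtain ⟨m, rfl | rfl⟩ := n.eq_nat_or_neg
  · calc ‖laurentCoeff φ m‖ * R ^ (m : ℤ) ≤ (C * (2 * R) ^ (-(m : ℤ))) * R ^ (m : ℤ) := by
          gcongr
          exact norm_laurentCoeff_le hφ (by positivity) (fun z hz => hC z (Or.inl hz)) _
      _ = C * (1 / 2) ^ (m : ℤ).natAbs := by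
          simp only [zpow_neg, zpow_natCast, mul_pow, Int.natAbs_natCast]
          field_simp
          rw [mul_assoc, ← mul_pow]
          norm_num
  · calc ‖laurentCoeff φ (-m)‖ * R ^ (-m : ℤ) ≤ (C * (R / 2) ^ (-(-m : ℤ))) * R ^ (-m : ℤ) := by
          gcongr
          exact norm_laurentCoeff_le hφ (by positivity) (fun z hz => hC z (Or.inr hz)) _
      _ = C * (1 / 2) ^ (-m : ℤ).natAbs := by
          simp only [neg_neg, zpow_neg, zpow_natCast, div_pow, Int.natAbs_neg, Int.natAbs_natCast,
            one_pow]
          field_simp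

theorem exists_norm_le_of_norm_eq {φ : ℂ → E} (hφ : DifferentiableOn ℂ φ {(0 : ℂ)}ᶜ) {a b : ℝ}
    (ha : 0 < a) (hb : 0 < b) : ∃ C, ∀ z, ‖z‖ = a ∨ ‖z‖ = b → ‖φ z‖ ≤ C := by
  obtain ⟨C, hC⟩ := ((isCompact_sphere (0 : ℂ) a).union
    (isCompact_sphere (0 : ℂ) b)).exists_bound_of_continuousOn (f := φ) <|
      hφ.continuousOn.mono fun z hz h => by
        rw [Set.mem_singleton_iff.1 h] at hz
        simp [ha.ne, hb.ne] at hz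
  exact ⟨C, fun z hz => hC z (by simpa using hz)⟩

theorem summable_norm_laurentCoeff {φ : ℂ → E} (hφ : DifferentiableOn ℂ φ {(0 : ℂ)}ᶜ)
    {R : ℝ} (hR : 0 < R) : Summable fun n : ℤ => ‖laurentCoeff φ n‖ * R ^ n := by
  obtain ⟨C, hC⟩ := exists_norm_le_of_norm_eq hφ (a := 2 * R) (b := R / 2) (by positivity)
    (by positivity)
  exact Summable.of_nonneg_of_le (fun n => by positivity)
    (norm_laurentCoeff_mul_zpow_le hφ hR hC) (summable_half_pow_natAbs.mul_left C)

theorem exists_laurentPolynomial_approx [CompleteSpace E] {φ : ℂ → E}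
    (hφ : DifferentiableOn ℂ φ {(0 : ℂ)}ᶜ) {a b δ : ℝ} (ha : 0 < a) (hb : 0 < b) (hδ : 0 < δ) :
    ∃ (p : ℂ → E) (M : ℕ) (C : ℝ), DifferentiableOn ℂ p {(0 : ℂ)}ᶜ ∧
      (∀ z, 1 ≤ ‖z‖ → ‖p z‖ ≤ C * ‖z‖ ^ M) ∧
      ∀ z, ‖z‖ = a ∨ ‖z‖ = b → ‖φ z - p z‖ < δ := by
  have hu : TendstoUniformlyOn (fun (t : Finset ℤ) z => ∑ n ∈ t, z ^ n • laurentCoeff φ n)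
      (fun z => ∑' n : ℤ, z ^ n • laurentCoeff φ n) atTop {z : ℂ | ‖z‖ = a ∨ ‖z‖ = b} := by
    refine tendstoUniformlyOn_tsum
      ((summable_norm_laurentCoeff hφ ha).add (summable_norm_laurentCoeff hφ hb)) ?_
    rintro n z (hz | hz) <;> rw [norm_smul, norm_zpow, hz, mul_comm]
    · exact le_add_of_nonneg_right (by positivity)
    · exact le_add_of_nonneg_left (by positivity)
  obtain ⟨t, ht⟩ := (Metric.tendstoUniformlyOn_iff.1 hu δ hδ).exists
  refine ⟨fun z => ∑ n ∈ t, z ^ n • laurentCoeff φ n, t.sup Int.natAbs,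
    ∑ n ∈ t, ‖laurentCoeff φ n‖, ?_, fun z hz => ?_, fun z hz => ?_⟩
  · exact DifferentiableOn.fun_sum fun n _ =>
      differentiableOn_zpow_smul (differentiableOn_const (laurentCoeff φ n)) n
  · rw [Finset.sum_mul]
    refine (norm_sum_le _ _).trans (Finset.sum_le_sum fun n hn => ?_)
    rw [norm_smul, norm_zpow, mul_comm, ← zpow_natCast]
    refine mul_le_mul_of_nonneg_left (zpow_le_zpow_right₀ hz ?_) (norm_nonneg _)
    have := Finset.le_sup (f := Int.natAbs) hn
    omega
  · have hz0 : z ≠ 0 := by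
      rintro rfl
      rw [norm_zero] at hz
      rcases hz with hz | hz
      · exact ha.ne hz
      · exact hb.ne hz
    have := ht z hz
    rwa [(hasSum_laurentCoeff hφ hz0).tsum_eq, dist_eq_norm] at this

variable {A : Type*} [NormedRing A]

theorem summable_mul_of_norm_le {e : ℤ → A} (he : Summable fun n => ‖e n‖) {y : ℕ → A} {K : ℝ}
    (hy : ∀ n, ‖y n‖ ≤ K) (n : ℤ) : Summable fun m : ℕ => ‖e (m - n) * y m‖ := by
  have hinj : Function.Injective fun m : ℕ => (m : ℤ) - n := fun a b h => by simpa using h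
  refine Summable.of_nonneg_of_le (fun m => norm_nonneg _) (fun m => ?_)
    ((he.comp_injective hinj).mul_right K)
  exact (norm_mul_le _ _).trans (mul_le_mul_of_nonneg_left (hy m) (norm_nonneg _))

theorem norm_tsum_mul_le {e : ℤ → A} (he : Summable fun n => ‖e n‖) {q : ℝ}
    (hq : ∑' n, ‖e n‖ ≤ q) {y : ℕ → A} {K : ℝ} (hy : ∀ n, ‖y n‖ ≤ K) (n : ℤ) :
    ‖∑' m : ℕ, e (m - n) * y m‖ ≤ q * K := by
  have hinj : Function.Injective fun m : ℕ => (m : ℤ) - n := fun a b h => by simpa using h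
  have hK : 0 ≤ K := (norm_nonneg _).trans (hy 0)
  have hs := (he.comp_injective hinj).mul_right K
  calc ‖∑' m : ℕ, e (m - n) * y m‖ ≤ ∑' m : ℕ, ‖e (m - n)‖ * K :=
        tsum_of_norm_bounded hs.hasSum fun m =>
          (norm_mul_le _ _).trans (mul_le_mul_of_nonneg_left (hy m) (norm_nonneg _))
    _ = (∑' m : ℕ, ‖e (m - n)‖) * K := tsum_mul_right
    _ ≤ q * K := by
        gcongr
        exact (tsum_comp_le_tsum_of_inj he (fun _ => norm_nonneg _) hinj).trans hq

/-- A Toeplitz equation whose symbol is close to the identity has a small bounded solution. -/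
theorem exists_toeplitz_solution [CompleteSpace A] {e : ℤ → A} (he : Summable fun n => ‖e n‖)
    (hq : ∑' n, ‖e n‖ ≤ 1 / 3) :
    ∃ y : ℕ → A, (∀ n, ‖y n‖ ≤ 1 / 2) ∧
      ∀ n : ℕ, e (-n - 1) + y n + ∑' m : ℕ, e (m - n) * y m = 0 := by
  have hen : ∀ n, ‖e n‖ ≤ 1 / 3 := fun n => (he.le_tsum n fun _ _ => norm_nonneg _).trans hq
  have hbd : ∀ (y : BoundedContinuousFunction ℕ A) (n : ℕ),
      ‖-(e (-n - 1) + ∑' m : ℕ, e (m - n) * y m)‖ ≤ 1 / 3 + 1 / 3 * ‖y‖ := fun y n => by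
    rw [norm_neg]
    exact (norm_add_le _ _).trans <|
      add_le_add (hen _) <| norm_tsum_mul_le he hq (fun m => y.norm_coe_le_norm m) _
  let Φ : BoundedContinuousFunction ℕ A → BoundedContinuousFunction ℕ A := fun y =>
    BoundedContinuousFunction.ofNormedAddCommGroupDiscrete _ _ (hbd y)
  have hΦ : ∀ y n, Φ y n = -(e (-n - 1) + ∑' m : ℕ, e (m - n) * y m) := fun y n => rfl
  have hcontr : ContractingWith (1 / 3) Φ := by
    refine ⟨by rw [← NNReal.coe_lt_coe]; norm_num, LipschitzWith.of_dist_le_mul fun y y' => ?_⟩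
    rw [BoundedContinuousFunction.dist_le (by positivity)]
    intro n
    have hs : ∀ v : BoundedContinuousFunction ℕ A, Summable fun m : ℕ => e (m - n) * v m :=
      fun v => (summable_mul_of_norm_le he (fun m => v.norm_coe_le_norm m) _).of_norm
    have : Φ y n - Φ y' n = -∑' m : ℕ, e (m - n) * (y - y') m := by
      simp only [hΦ, BoundedContinuousFunction.sub_apply, mul_sub]
      rw [(hs y).tsum_sub (hs y')]
      abel
    rw [dist_eq_norm, this, norm_neg, dist_eq_norm]
    have := norm_tsum_mul_le he hq (fun m => (y - y').norm_coe_le_norm m) n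
    simpa using this
  have hfix := hcontr.fixedPoint_isFixedPt
  set y := hcontr.fixedPoint Φ
  have hn : ‖y‖ ≤ 1 / 3 + 1 / 3 * ‖y‖ := by
    conv_lhs => rw [← hfix.eq]
    exact (BoundedContinuousFunction.norm_le (by positivity)).2 (hbd y)
  refine ⟨y, fun n => (y.norm_coe_le_norm n).trans (by linarith), fun n => ?_⟩
  have := hΦ y n
  rw [hfix.eq] at this
  rw [this]
  abel

theorem differentiable_tsum_pow_smul {F : Type*} [NormedAddCommGroup F] [NormedSpace ℂ F]
    [CompleteSpace F] {c : ℕ → F}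
    (hc : ∀ R : ℝ, 2 ≤ R → Summable fun n : ℕ => (R : ℂ) ^ n • c n) :
    Differentiable ℂ fun z : ℂ => ∑' n : ℕ, z ^ n • c n := by
  intro z₀
  obtain ⟨R, hR1, hR⟩ : ∃ R : ℝ, 1 ≤ R ∧ ‖z₀‖ < R :=
    ⟨‖z₀‖ + 1, by linarith [norm_nonneg z₀], by linarith⟩
  obtain ⟨K, hK⟩ := (hc (2 * R) (by linarith)).tendsto_atTop_zero.norm.bddAbove_range
  have hK' : ∀ n, (2 * R) ^ n * ‖c n‖ ≤ K := fun n => by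
    have := hK ⟨n, rfl⟩
    simpa [norm_smul, abs_of_nonneg (zero_le_one.trans hR1)] using this
  refine (Complex.differentiableOn_tsum_of_summable_norm (u := fun n => K * (1 / 2) ^ n)
    ((summable_geometric_of_lt_one (by norm_num) (by norm_num)).mul_left K)
    (fun n => by fun_prop) (Metric.isOpen_ball (x := (0 : ℂ)) (ε := R))
    fun n w hw => ?_).differentiableAt (Metric.isOpen_ball.mem_nhds (by simpa using hR))
  have hw' : ‖w‖ ≤ R := by simpa using (Metric.mem_ball.1 hw).le
  calc ‖w ^ n • c n‖ ≤ R ^ n * ‖c n‖ := by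
        rw [norm_smul, norm_pow]
        gcongr
    _ = ((2 * R) ^ n * ‖c n‖) * (1 / 2) ^ n := by
        rw [mul_right_comm, ← mul_pow]
        congr 2
        ring
    _ ≤ K * (1 / 2) ^ n := by
        gcongr
        exact hK' n

theorem HasSum.mul_of_summable_norm [CompleteSpace A] {ι κ : Type*} {F : ι → A} {G : κ → A}
    {a b : A} (hF : HasSum F a) (hG : HasSum G b) (hF' : Summable fun i => ‖F i‖)
    (hG' : Summable fun i => ‖G i‖) : HasSum (fun p : ι × κ => F p.1 * G p.2) (a * b) :=
  hF.mul hG (summable_mul_of_summable_norm hF' hG')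

variable [NormedAlgebra ℂ A]

/-- The product of a Laurent series and a power series in `z⁻¹`. -/
theorem hasSum_laurent_mul [CompleteSpace A] {d : ℤ → A} {x : ℕ → A} {z : ℂ} (hz : z ≠ 0) {a b : A}
    (hd : HasSum (fun n : ℤ => z ^ n • d n) a) (hd' : Summable fun n : ℤ => ‖z ^ n • d n‖)
    (hx : HasSum (fun m : ℕ => z⁻¹ ^ m • x m) b) (hx' : Summable fun m : ℕ => ‖z⁻¹ ^ m • x m‖) :
    HasSum (fun n : ℤ => z ^ n • ∑' m : ℕ, d (n + m) * x m) (a * b) := by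
  have hprod := hd.mul_of_summable_norm hx hd' hx'
  let σ : ℤ × ℕ ≃ ℤ × ℕ :=
    { toFun := fun p => (p.1 + p.2, p.2)
      invFun := fun p => (p.1 - p.2, p.2)
      left_inv := fun p => by simp
      right_inv := fun p => by simp }
  have hprod' : HasSum (fun p : ℤ × ℕ => z ^ p.1 • (d (p.1 + p.2) * x p.2)) (a * b) := by
    rw [← σ.hasSum_iff] at hprod
    convert hprod using 2 with p
    simp only [Function.comp_apply, σ, Equiv.coe_fn_mk, smul_mul_smul_comm]
    rw [zpow_add₀ hz, mul_assoc, zpow_natCast, ← mul_pow, mul_inv_cancel₀ hz, one_pow, mul_one]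
  have hfib : ∀ n : ℤ, HasSum (fun m : ℕ => z ^ n • (d (n + m) * x m))
      (z ^ n • ∑' m : ℕ, d (n + m) * x m) := fun n => by
    rw [← tsum_const_smul'']
    exact (hprod'.summable.prod_factor n).hasSum
  exact hprod'.prod_fiberwise hfib

theorem exists_entire_mul [CompleteSpace A] :
    ∃ δ : ℝ, 0 < δ ∧ ∀ ε : ℂ → A, DifferentiableOn ℂ ε {(0 : ℂ)}ᶜ →
      (∀ z, ‖z‖ = 2 ∨ ‖z‖ = 1 / 2 → ‖ε z‖ ≤ δ) →
      ∃ (X u : ℂ → A) (B : ℝ), Differentiable ℂ u ∧ (∀ z, 2 ≤ ‖z‖ → ‖X z‖ ≤ B) ∧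
        (∀ z, 2 ≤ ‖z‖ → (1 + ε z) * X z = u z) ∧ IsUnit (u 2) := by
  set S := ∑' n : ℤ, (1 / 2 : ℝ) ^ n.natAbs
  have hS : 1 ≤ S := by
    exact (by simp : (1 : ℝ) ≤ (1 / 2 : ℝ) ^ (0 : ℤ).natAbs).trans
      (summable_half_pow_natAbs.le_tsum 0 fun _ _ => by positivity)
  refine ⟨1 / (3 * S), by positivity, fun ε hε hεδ => ?_⟩
  have hle : ∀ n, ‖laurentCoeff ε n‖ ≤ 1 / (3 * S) * (1 / 2) ^ n.natAbs := fun n => by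
    simpa using norm_laurentCoeff_mul_zpow_le hε one_pos (by simpa using hεδ) n
  have hsum := summable_norm_laurentCoeff hε one_pos
  simp only [one_zpow, mul_one] at hsum
  have hq : ∑' n, ‖laurentCoeff ε n‖ ≤ 1 / 3 := by
    refine (hsum.tsum_le_tsum hle (summable_half_pow_natAbs.mul_left _)).trans_eq ?_
    rw [tsum_mul_left]
    change 1 / (3 * S) * S = 1 / 3
    field_simp
  obtain ⟨y, hy, hye⟩ := exists_toeplitz_solution hsum hq
  set e := laurentCoeff ε with he
  let d : ℤ → A := fun n => e n + Pi.single (M := fun _ => A) 0 1 n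
  let x : ℕ → A := fun m => Nat.casesOn m 1 y
  have hxB : ∀ m, ‖x m‖ ≤ max ‖(1 : A)‖ (1 / 2) := by
    rintro (_ | m)
    · exact le_max_left _ _
    · exact (hy m).trans (le_max_right _ _)
  set B := max ‖(1 : A)‖ (1 / 2)
  have hgeo := summable_geometric_of_lt_one (by norm_num : (0 : ℝ) ≤ 1 / 2) (by norm_num)
  have hxle : ∀ z : ℂ, 2 ≤ ‖z‖ → ∀ m, ‖z⁻¹ ^ m • x m‖ ≤ (1 / 2) ^ m * B := fun z hz m => by
    rw [norm_smul, norm_pow, norm_inv]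
    gcongr
    · rw [one_div]
      exact inv_anti₀ two_pos hz
    · exact hxB m
  have hx' : ∀ z : ℂ, 2 ≤ ‖z‖ → Summable fun m : ℕ => ‖z⁻¹ ^ m • x m‖ := fun z hz =>
    Summable.of_nonneg_of_le (fun _ => norm_nonneg _) (hxle z hz) (hgeo.mul_right B)
  have hne : ∀ z : ℂ, 2 ≤ ‖z‖ → z ≠ 0 := fun z hz h => by
    rw [h, norm_zero] at hz
    linarith
  have hsingle : ∀ z : ℂ, HasSum (fun n : ℤ => z ^ n • (Pi.single (M := fun _ => A) 0 1 n)) 1 := by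
    intro z
    convert hasSum_single (f := fun n : ℤ => z ^ n • (Pi.single (M := fun _ => A) 0 1 n)) 0
      (fun n hn => by simp [hn]) using 1
    simp
  have hd : ∀ z : ℂ, z ≠ 0 → HasSum (fun n : ℤ => z ^ n • d n) (1 + ε z) := fun z hz => by
    rw [add_comm]
    simpa only [d, smul_add] using (hasSum_laurentCoeff hε hz).add (hsingle z)
  have hd' : ∀ z : ℂ, z ≠ 0 → Summable fun n : ℤ => ‖z ^ n • d n‖ := fun z hz => by
    have h1 : Summable fun n : ℤ => ‖z ^ n • e n‖ := by
      simpa only [norm_smul, norm_zpow, mul_comm] using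
        summable_norm_laurentCoeff hε (norm_pos_iff.2 hz)
    have h2 : Summable fun n : ℤ => ‖z ^ n • (Pi.single (M := fun _ => A) 0 1 n)‖ :=
      summable_of_ne_finset_zero (s := {0}) fun n hn => by
        simp [Finset.notMem_singleton.1 hn]
    refine Summable.of_nonneg_of_le (fun _ => norm_nonneg _) (fun n => ?_) (h1.add h2)
    simp only [d, smul_add]
    exact norm_add_le _ _
  let c : ℤ → A := fun n => ∑' m : ℕ, d (n + m) * x m
  have hc : ∀ z : ℂ, 2 ≤ ‖z‖ →
      HasSum (fun n : ℤ => z ^ n • c n) ((1 + ε z) * ∑' m : ℕ, z⁻¹ ^ m • x m) := fun z hz =>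
    hasSum_laurent_mul (hne z hz) (hd z (hne z hz)) (hd' z (hne z hz)) (hx' z hz).of_norm.hasSum
      (hx' z hz)
  have hcneg : ∀ n : ℤ, n ∉ Set.range ((↑) : ℕ → ℤ) → c n = 0 := fun n hn => by
    obtain ⟨j, rfl⟩ : ∃ j : ℕ, n = -j - 1 := by
      refine ⟨(-n - 1).toNat, ?_⟩
      have : n < 0 := by
        by_contra h
        exact hn ⟨n.toNat, Int.toNat_of_nonneg (not_lt.1 h)⟩
      omega
    have h1 : HasSum (fun m : ℕ => e (m - j) * y m) (∑' m : ℕ, e (m - j) * y m) :=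
      (summable_mul_of_norm_le hsum hy j).of_norm.hasSum
    have h2 : HasSum (fun m : ℕ => Pi.single (M := fun _ => A) 0 1 ((m : ℤ) - j) * y m) (y j) := by
      convert hasSum_single (f := fun m : ℕ =>
        Pi.single (M := fun _ => A) 0 1 ((m : ℤ) - j) * y m) j (fun m hm => ?_) using 1
      · simp
      · have : (m : ℤ) - j ≠ 0 := by omega
        simp [this]
    have h3 : HasSum (fun m : ℕ => d (-j - 1 + (m + 1 : ℕ)) * x (m + 1))
        ((∑' m : ℕ, e (m - j) * y m) + y j) := by
      convert h1.add h2 using 2 with m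
      rw [← add_mul]
      have : (-j - 1 + (m + 1 : ℕ) : ℤ) = m - j := by push_cast; ring
      rw [this]
    have h4 : d (-j - 1 + (0 : ℕ)) * x 0 = e (-j - 1) := by
      have : (-j - 1 : ℤ) ≠ 0 := by omega
      simp [d, x, this]
    have h5 := (h3.zero_add (f := fun m : ℕ => d (-j - 1 + m) * x m)).tsum_eq
    change ∑' m : ℕ, d (-j - 1 + m) * x m = 0
    rw [h5, h4, ← hye j]
    abel
  have hu : ∀ z : ℂ, 2 ≤ ‖z‖ →
      HasSum (fun n : ℕ => z ^ n • c n) ((1 + ε z) * ∑' m : ℕ, z⁻¹ ^ m • x m) := fun z hz => by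
    have := (Nat.cast_injective.hasSum_iff fun n hn => by rw [hcneg n hn, smul_zero]).2 (hc z hz)
    simpa [Function.comp_def] using this
  refine ⟨fun z => ∑' m : ℕ, z⁻¹ ^ m • x m, fun z => ∑' n : ℕ, z ^ n • c n, ∑' m, (1 / 2) ^ m * B,
    ?_, fun z hz => tsum_of_norm_bounded (hgeo.mul_right B).hasSum (hxle z hz),
    fun z hz => (hu z hz).tsum_eq.symm, ?_⟩
  · refine differentiable_tsum_pow_smul (c := fun n : ℕ => c n) fun R hR => (hu R ?_).summable
    simpa [abs_of_nonneg (zero_le_two.trans hR)] using hR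
  · have h2 : (2 : ℝ) ≤ ‖(2 : ℂ)‖ := by simp
    have hunit : ∀ a : A, ‖a‖ < 1 → IsUnit (1 + a) := fun a ha => by
      simpa using isUnit_one_sub_of_norm_lt_one (x := -a) (by simpa using ha)
    simp only
    rw [(hu 2 h2).tsum_eq]
    refine (hunit _ ?_).mul ?_
    · refine (hεδ 2 (by simp)).trans_lt ?_
      rw [div_lt_one (by positivity)]
      linarith
    · rw [(hx' 2 h2).of_norm.tsum_eq_zero_add]
      simp only [pow_zero, one_smul]
      refine hunit _ ((tsum_of_norm_bounded
        (((hasSum_geometric_of_lt_one (by norm_num : (0 : ℝ) ≤ 1 / 2) (by norm_num)).mul_left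
          (1 / 4))) fun m => ?_).trans_lt (by norm_num))
      rw [norm_smul]
      calc ‖(2 : ℂ)⁻¹ ^ (m + 1)‖ * ‖y m‖ ≤ (1 / 2) ^ (m + 1) * (1 / 2) := by
            gcongr
            · simp
            · exact hy m
        _ = 1 / 4 * (1 / 2) ^ m := by ring

end Toeplitz

theorem exists_entire_extension {E : Type*} [NormedAddCommGroup E] [NormedSpace ℂ E]
    [CompleteSpace E] {φ : ℂ → E} (hφ : DifferentiableOn ℂ φ {(0 : ℂ)}ᶜ) {r B : ℝ} (hr : 0 < r)
    (hB : ∀ w, w ≠ 0 → ‖w‖ < r → ‖φ w‖ ≤ B) :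
    ∃ ψ : ℂ → E, Differentiable ℂ ψ ∧ ∀ w, w ≠ 0 → ψ w = φ w := by
  refine ⟨Function.update φ 0 (limUnder (𝓝[≠] 0) φ), fun z => ?_,
    fun w hw => Function.update_of_ne hw _ _⟩
  by_cases hz : z = 0
  · subst hz
    have hball := Metric.ball_mem_nhds (0 : ℂ) hr
    refine (Complex.differentiableOn_update_limUnder_of_bddAbove hball (hφ.mono fun w hw => hw.2)
      ⟨B, ?_⟩).differentiableAt hball
    rintro _ ⟨w, ⟨hw, hw0⟩, rfl⟩
    exact hB w hw0 (by simpa using hw)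
  · have hmem := isOpen_compl_singleton.mem_nhds hz
    refine (hφ.differentiableAt hmem).congr_of_eventuallyEq ?_
    filter_upwards [hmem] with w hw using Function.update_of_ne hw _ _

theorem exists_meromorphic_frame {A : Type*} [NormedRing A] [NormedAlgebra ℂ A] [CompleteSpace A]
    {f g : ℂ → A} (hf : DifferentiableOn ℂ f {(0 : ℂ)}ᶜ) (hg : DifferentiableOn ℂ g {(0 : ℂ)}ᶜ)
    (hfg : ∀ z, z ≠ 0 → f z * g z = 1) (hgf : ∀ z, z ≠ 0 → g z * f z = 1) :
    ∃ (M : ℕ) (U V : ℂ → A), Differentiable ℂ U ∧ Differentiable ℂ V ∧ IsUnit (U 2) ∧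
      ∀ z, z ≠ 0 → f z * V z⁻¹ = z⁻¹ ^ M • U z := by
  obtain ⟨δ, hδ, H⟩ := exists_entire_mul (A := A)
  obtain ⟨K, hK⟩ := exists_norm_le_of_norm_eq hf (a := 2) (b := 1 / 2) (by norm_num) (by norm_num)
  have hK0 : 0 ≤ K := (norm_nonneg _).trans (hK 2 (by simp))
  obtain ⟨p, M, C, hp, hpC, hpg⟩ := exists_laurentPolynomial_approx hg (a := 2) (b := 1 / 2)
    (by norm_num) (by norm_num) (by positivity : 0 < δ / (K + 1))
  obtain ⟨X, u, B, hu, hX, hXu, hunit⟩ := H (fun z => f z * p z - 1)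
    ((hf.mul hp).sub_const 1) fun z hz => by
      have hz0 : z ≠ 0 := by
        rintro rfl
        norm_num at hz
      have : f z * p z - 1 = -(f z * (g z - p z)) := by
        rw [mul_sub, hfg z hz0]
        abel
      rw [this, norm_neg]
      calc ‖f z * (g z - p z)‖ ≤ K * (δ / (K + 1)) :=
            (norm_mul_le _ _).trans
              (mul_le_mul (hK z hz) (hpg z hz).le (norm_nonneg _) hK0)
        _ = δ * (K / (K + 1)) := by ring
        _ ≤ δ := mul_le_of_le_one_right hδ.le ((div_le_one (by positivity)).2 (by linarith))
  have hinv : Set.MapsTo (fun w : ℂ => w⁻¹) {(0 : ℂ)}ᶜ {(0 : ℂ)}ᶜ := fun w hw => by simpa using hw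
  have hd : DifferentiableOn ℂ (fun w : ℂ => w ^ M • (g w⁻¹ * u w⁻¹)) {(0 : ℂ)}ᶜ := by
    have h1 : DifferentiableOn ℂ (fun w : ℂ => w⁻¹) {(0 : ℂ)}ᶜ := differentiableOn_inv
    exact (differentiableOn_pow M).smul
      ((hg.comp h1 hinv).mul (hu.differentiableOn.comp h1 (Set.mapsTo_univ _ _)))
  obtain ⟨V, hV, hVeq⟩ := exists_entire_extension hd (r := 1 / 2) (B := C * B) (by norm_num)
    fun w hw0 hw => by
      have hw2 : 2 ≤ ‖w⁻¹‖ := by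
        rw [norm_inv, le_inv_comm₀ two_pos (norm_pos_iff.2 hw0)]
        linarith
      have hz0 : w⁻¹ ≠ 0 := inv_ne_zero hw0
      have hgu : g w⁻¹ * u w⁻¹ = p w⁻¹ * X w⁻¹ := by
        rw [← hXu _ hw2, add_sub_cancel, ← mul_assoc, ← mul_assoc, hgf _ hz0, one_mul]
      have hpw := hpC w⁻¹ (by linarith)
      rw [hgu, norm_smul, norm_pow]
      calc ‖w‖ ^ M * ‖p w⁻¹ * X w⁻¹‖ ≤ ‖w‖ ^ M * ((C * ‖w⁻¹‖ ^ M) * B) := by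
            gcongr
            exact (norm_mul_le _ _).trans
              (mul_le_mul hpw (hX _ hw2) (norm_nonneg _) ((norm_nonneg _).trans hpw))
        _ = (‖w‖ * ‖w⁻¹‖) ^ M * (C * B) := by rw [mul_pow]; ring
        _ = C * B := by
            rw [norm_inv, mul_inv_cancel₀ (norm_ne_zero_iff.2 hw0), one_pow, one_mul]
  refine ⟨M, u, V, hu, hV, hunit, fun z hz => ?_⟩
  rw [hVeq _ (inv_ne_zero hz), inv_inv, mul_smul_comm, ← mul_assoc, hfg z hz, one_mul]

section Matrix

variable {n : Type*} [Fintype n] [DecidableEq n]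

section Norm

attribute [local instance] Matrix.linftyOpNormedRing Matrix.linftyOpNormedAlgebra

theorem differentiableOn_matrix_iff {U : ℂ → Matrix n n ℂ} {s : Set ℂ} :
    DifferentiableOn ℂ U s ↔ ∀ i j, DifferentiableOn ℂ (fun z => U z i j) s := by
  refine ⟨fun h i j => ?_, fun h => ?_⟩
  · exact (LinearMap.toContinuousLinearMap (Matrix.entryLinearMap ℂ ℂ i j)).differentiable
      |>.comp_differentiableOn h
  · have : U = fun z => ∑ i, ∑ j, U z i j • Matrix.single i j (1 : ℂ) := by
      ext1 z
      conv_lhs => rw [Matrix.matrix_eq_sum_single (U z)]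
      simp [Matrix.smul_single]
    rw [this]
    exact DifferentiableOn.fun_sum fun i _ => DifferentiableOn.fun_sum fun j _ =>
      (h i j).smul_const _

theorem differentiableOn_matrix_inv {U : ℂ → Matrix n n ℂ} {s : Set ℂ}
    (hU : ∀ i j, DifferentiableOn ℂ (fun z => U z i j) s) (hunit : ∀ z ∈ s, IsUnit (U z))
    (i j : n) :
    DifferentiableOn ℂ (fun z => (U z)⁻¹ i j) s := by
  have : CompleteSpace (Matrix n n ℂ) := FiniteDimensional.complete ℂ _
  revert i j
  rw [← differentiableOn_matrix_iff (U := fun z => (U z)⁻¹)]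
  simp only [Matrix.nonsing_inv_eq_ringInverse]
  exact (differentiableOn_matrix_iff.2 hU).inverse hunit

theorem exists_matrix_meromorphic_frame {f : ℂ → Matrix n n ℂ}
    (hf : ∀ i j, DifferentiableOn ℂ (fun z => f z i j) {(0 : ℂ)}ᶜ)
    (hunit : ∀ z : ℂ, z ≠ 0 → IsUnit (f z)) :
    ∃ (M : ℕ) (U V : ℂ → Matrix n n ℂ), (∀ i j, Differentiable ℂ fun z => U z i j) ∧
      (∀ i j, Differentiable ℂ fun z => V z i j) ∧ IsUnit (U 2) ∧
      ∀ z, z ≠ 0 → f z * V z⁻¹ = z⁻¹ ^ M • U z := by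
  have : CompleteSpace (Matrix n n ℂ) := FiniteDimensional.complete ℂ _
  obtain ⟨M, U, V, hU, hV, h2, h⟩ := exists_meromorphic_frame (differentiableOn_matrix_iff.2 hf)
    (differentiableOn_matrix_iff.2 (differentiableOn_matrix_inv hf fun z hz => hunit z hz))
    (fun z hz => Matrix.mul_nonsing_inv _ ((Matrix.isUnit_iff_isUnit_det _).1 (hunit z hz)))
    (fun z hz => Matrix.nonsing_inv_mul _ ((Matrix.isUnit_iff_isUnit_det _).1 (hunit z hz)))
  simp only [← differentiableOn_univ] at hU hV ⊢
  exact ⟨M, U, V, differentiableOn_matrix_iff.1 hU, differentiableOn_matrix_iff.1 hV, h2, h⟩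

end Norm

theorem differentiable_matrix_det {U : ℂ → Matrix n n ℂ}
    (hU : ∀ i j, Differentiable ℂ fun z => U z i j) : Differentiable ℂ fun z => (U z).det := by
  simp only [Matrix.det_apply]
  exact Differentiable.fun_sum fun σ _ =>
    (Differentiable.fun_finsetProd fun i _ => hU _ _).const_smul _

theorem differentiable_matrix_updateCol {m : Type*} [DecidableEq m] {U : ℂ → Matrix m m ℂ}
    (hU : ∀ i j, Differentiable ℂ fun z => U z i j) (k : m) {u : ℂ → m → ℂ}
    (hu : ∀ i, Differentiable ℂ fun z => u z i) (i j : m) :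
    Differentiable ℂ fun z => (U z).updateCol k (u z) i j := by
  simp only [Matrix.updateCol_apply]
  split_ifs
  exacts [hu i, hU i j]

theorem exists_entire_factor {φ : ℂ → ℂ} (hφ : Differentiable ℂ φ) {c : ℂ} (hc : φ c = 0) :
    ∃ ψ : ℂ → ℂ, Differentiable ℂ ψ ∧ ∀ z, φ z = (z - c) * ψ z := by
  refine ⟨dslope φ c, ?_, fun z => ?_⟩
  · rw [← differentiableOn_univ] at hφ ⊢
    exact (Complex.differentiableOn_dslope univ_mem).2 hφ
  · rw [← smul_eq_mul, sub_smul_dslope, hc, sub_zero]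

theorem exists_entire_factor_inv {φ : ℂ → ℂ} (hφ : Differentiable ℂ φ) {c : ℂ}
    (hc : c ≠ 0 → φ c⁻¹ = 0) :
    ∃ ψ : ℂ → ℂ, Differentiable ℂ ψ ∧ ∀ w, φ w = (1 - w * c) * ψ w := by
  by_cases h : c = 0
  · exact ⟨φ, hφ, fun w => by simp [h]⟩
  · obtain ⟨ψ, hψ, hψφ⟩ := exists_entire_factor hφ (hc h)
    refine ⟨fun w => -c⁻¹ * ψ w, hψ.const_mul _, fun w => ?_⟩
    rw [hψφ]
    field_simp
    ring

/-- An entire function that is `z ^ (-s) * G z⁻¹` for an entire `G` and `s > 0` vanishes: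
line bundles of negative degree on the Riemann sphere have no nonzero sections. -/
theorem eq_zero_of_entire_of_entire_inv {G H : ℂ → ℂ} (hG : Differentiable ℂ G)
    (hH : Differentiable ℂ H) {s : ℤ} (hs : 0 < s)
    (h : ∀ z, z ≠ 0 → G z⁻¹ = z ^ s * H z) (z : ℂ) : H z = 0 := by
  obtain ⟨k, rfl⟩ := Int.eq_ofNat_of_zero_le hs.le
  have hk : k ≠ 0 := by
    rintro rfl
    exact hs.ne rfl
  simp only [zpow_natCast] at h
  have hE : Differentiable ℂ fun z => z ^ k * H z := (differentiable_pow k).mul hH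
  have hbd : Bornology.IsBounded (Set.range fun z => z ^ k * H z) := by
    have hcpt := isCompact_closedBall (0 : ℂ) 1
    refine ((hcpt.image hE.continuous).isBounded.union
      (hcpt.image hG.continuous).isBounded).subset ?_
    rintro _ ⟨z, rfl⟩
    by_cases hz : ‖z‖ ≤ 1
    · exact Or.inl ⟨z, by simpa using hz, rfl⟩
    · have hz0 : z ≠ 0 := by
        rintro rfl
        simp at hz
      refine Or.inr ⟨z⁻¹, ?_, h z hz0⟩
      simpa using inv_le_one_of_one_le₀ (not_le.1 hz).le
  have hzero : ∀ z, z ^ k * H z = 0 := fun z => by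
    simpa [hk] using hE.apply_eq_apply_of_bounded hbd z 0
  refine congrFun (hH.continuous.ext_on (dense_compl_singleton (0 : ℂ)) continuous_zero
    fun w hw => ?_) z
  exact (mul_eq_zero.1 (hzero w)).resolve_left (pow_ne_zero k hw)

/-- A pair of entire, generically invertible matrices intertwining `diag (z ^ a i)` with the
clutching function `f`: a generic isomorphism from the direct sum of the `O(a i)` to the bundle
of `f`. -/
structure IsFrame (f : ℂ → Matrix n n ℂ) (a : n → ℤ) (U V : ℂ → Matrix n n ℂ) : Prop where
  left_differentiable : ∀ i j, Differentiable ℂ fun z => U z i j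
  right_differentiable : ∀ i j, Differentiable ℂ fun z => V z i j
  exists_det_ne_zero : ∃ z, z ≠ 0 ∧ (U z).det ≠ 0
  mul_eq : ∀ z, z ≠ 0 → f z * V z⁻¹ = U z * Matrix.diagonal fun i => z ^ a i

theorem diagonal_zpow_mul_inv (a : n → ℤ) {z : ℂ} (hz : z ≠ 0) :
    (Matrix.diagonal fun i => z ^ a i) * (Matrix.diagonal fun i => z⁻¹ ^ a i) = 1 := by
  rw [Matrix.diagonal_mul_diagonal, ← Matrix.diagonal_one]
  congr 1
  ext i
  rw [← mul_zpow, mul_inv_cancel₀ hz, one_zpow]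

theorem prod_zpow (a : n → ℤ) {z : ℂ} (hz : z ≠ 0) : ∏ i, z ^ a i = z ^ ∑ i, a i := by
  classical
  induction (Finset.univ : Finset n) using Finset.induction_on with
  | empty => simp
  | insert i s hi ih => rw [Finset.prod_insert hi, Finset.sum_insert hi, zpow_add₀ hz, ih]

namespace IsFrame

variable {f : ℂ → Matrix n n ℂ} {a : n → ℤ} {U V : ℂ → Matrix n n ℂ}

theorem det_eq (h : IsFrame f a U V) {z : ℂ} (hz : z ≠ 0) :
    (f z).det * (V z⁻¹).det = z ^ (∑ i, a i) * (U z).det := by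
  rw [← Matrix.det_mul, h.mul_eq z hz, Matrix.det_mul, Matrix.det_diagonal, prod_zpow a hz,
    mul_comm]

/-- Exchanging the charts at `0` and `∞`. -/
theorem swap (h : IsFrame f a U V) (hunit : ∀ z : ℂ, z ≠ 0 → IsUnit (f z)) :
    IsFrame (fun w => (f w⁻¹)⁻¹) a V U where
  left_differentiable := h.right_differentiable
  right_differentiable := h.left_differentiable
  exists_det_ne_zero := by
    obtain ⟨z, hz, hd⟩ := h.exists_det_ne_zero
    refine ⟨z⁻¹, inv_ne_zero hz, fun h0 => ?_⟩
    have := h.det_eq hz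
    rw [h0, mul_zero] at this
    exact mul_ne_zero (zpow_ne_zero _ hz) hd this.symm
  mul_eq w hw := by
    have h1 := h.mul_eq w⁻¹ (inv_ne_zero hw)
    have h2 := diagonal_zpow_mul_inv a (inv_ne_zero hw)
    rw [inv_inv] at h1 h2
    have h3 : U w⁻¹ = f w⁻¹ * (V w * Matrix.diagonal fun i => w ^ a i) := by
      rw [← mul_assoc, h1, mul_assoc, h2, mul_one]
    rw [h3, Matrix.nonsing_inv_mul_cancel_left _ _
      ((Matrix.isUnit_iff_isUnit_det _).1 (hunit _ (inv_ne_zero hw)))]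

theorem exists_raise (h : IsFrame f a U V)
    (hf : ∀ i j, DifferentiableOn ℂ (fun z => f z i j) {(0 : ℂ)}ᶜ)
    (hunit : ∀ z : ℂ, z ≠ 0 → IsUnit (f z)) {z₀ : ℂ} (hz₀ : (U z₀).det = 0) :
    ∃ (b : n → ℤ) (U' V' : ℂ → Matrix n n ℂ), IsFrame f b U' V' ∧ ∑ i, b i = ∑ i, a i + 1 := by
  obtain ⟨c, hc0, hc⟩ := Matrix.exists_mulVec_eq_zero_iff.2 hz₀
  obtain ⟨j, hj, hmin⟩ := Finset.exists_min_image (Finset.univ.filter fun k => c k ≠ 0) a <| by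
    obtain ⟨k, hk⟩ := Function.ne_iff.1 hc0
    exact ⟨k, by simpa using hk⟩
  simp only [Finset.mem_filter, Finset.mem_univ, true_and] at hj hmin
  let e : n → ℕ := fun k => (a k - a j).toNat
  let u : ℂ → n → ℂ := fun z => Matrix.mulVec (U z) c
  let v : ℂ → n → ℂ := fun w => Matrix.mulVec (V w) fun k => c k * w ^ e k
  have hu : ∀ i, Differentiable ℂ fun z => u z i := fun i =>
    Differentiable.fun_sum fun k _ => (h.left_differentiable i k).mul_const _
  have hv : ∀ i, Differentiable ℂ fun z => v z i := fun i =>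
    Differentiable.fun_sum fun k _ => (h.right_differentiable i k).mul
      ((differentiable_pow _).const_mul _)
  have huv : ∀ z, z ≠ 0 → Matrix.mulVec (f z) (v z⁻¹) = z ^ a j • u z := fun z hz => by
    have hdiag : (Matrix.mulVec (Matrix.diagonal fun i => z ^ a i) fun k => c k * z⁻¹ ^ e k) =
        z ^ a j • c := by
      ext k
      rw [Matrix.mulVec_diagonal, Pi.smul_apply, smul_eq_mul]
      by_cases hk : c k = 0
      · simp [hk]
      · have hek : a k = a j + (e k : ℤ) := by
          have := hmin k hk
          simp only [e]
          omega
        rw [hek, zpow_add₀ hz, zpow_natCast, inv_pow]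
        field_simp
    simp only [u, v]
    rw [Matrix.mulVec_mulVec, h.mul_eq z hz, ← Matrix.mulVec_mulVec, hdiag, Matrix.mulVec_smul]
  have hv0 : z₀ ≠ 0 → v z₀⁻¹ = 0 := fun hz => by
    refine Matrix.mulVec_injective_of_isUnit (hunit z₀ hz) ?_
    rw [huv z₀ hz, Matrix.mulVec_zero]
    simp only [u, hc, smul_zero]
  choose u' hu' huu' using fun i => exists_entire_factor (hu i) (congrFun hc i)
  choose v' hv' hvv' using fun i => exists_entire_factor_inv (hv i) fun hz => congrFun (hv0 hz) i
  have huv_ne : ∀ z, z ≠ 0 → z ≠ z₀ → ∀ i,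
      Matrix.mulVec (f z) (fun k => v' k z⁻¹) i = z ^ (a j + 1) * u' i z := fun z hz hne i => by
    have h1 : v z⁻¹ = (1 - z⁻¹ * z₀) • fun k => v' k z⁻¹ := funext fun k => hvv' k z⁻¹
    have h2 := congrFun (huv z hz) i
    rw [h1, Matrix.mulVec_smul, Pi.smul_apply, Pi.smul_apply, smul_eq_mul, smul_eq_mul, huu'] at h2
    have h3 : z - z₀ = z * (1 - z⁻¹ * z₀) := by field_simp
    have h4 : 1 - z⁻¹ * z₀ ≠ 0 := fun h4 => by
      rw [h4, mul_zero] at h3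
      exact hne (sub_eq_zero.1 h3)
    rw [h3] at h2
    refine mul_left_cancel₀ h4 ?_
    rw [h2, zpow_add_one₀ hz]
    ring
  have huv' : ∀ z, z ≠ 0 →
      Matrix.mulVec (f z) (fun k => v' k z⁻¹) = z ^ (a j + 1) • fun i => u' i z := fun z hz => by
    ext i
    rw [Pi.smul_apply, smul_eq_mul]
    by_cases hne : z = z₀
    · have hl : ContinuousAt (fun z => Matrix.mulVec (f z) (fun k => v' k z⁻¹) i) z :=
        tendsto_finsetSum _ fun k _ =>
          (((hf i k).differentiableAt (isOpen_compl_singleton.mem_nhds hz)).continuousAt).mul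
            ((hv' k).continuous.continuousAt.comp (continuousAt_inv₀ hz))
      have hr : ContinuousAt (fun z => z ^ (a j + 1) * u' i z) z :=
        (continuousAt_zpow₀ z _ (Or.inl hz)).mul (hu' i).continuous.continuousAt
      refine ((hl.eventuallyEq_nhds_iff_eventuallyEq_nhdsNE hr).1 ?_).eq_of_nhds
      filter_upwards [self_mem_nhdsWithin,
        nhdsWithin_le_nhds (isOpen_compl_singleton.mem_nhds hz)] with w hw hw0
      exact huv_ne w hw0 (hne ▸ hw) i
    · exact huv_ne z hz hne i
  refine ⟨Function.update a j (a j + 1), fun z => (U z).updateCol j fun i => u' i z,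
    fun w => (V w).updateCol j fun i => v' i w, ⟨?_, ?_, ?_, ?_⟩, ?_⟩
  · exact differentiable_matrix_updateCol h.left_differentiable j hu'
  · exact differentiable_matrix_updateCol h.right_differentiable j hv'
  · obtain ⟨z, hz, hd⟩ := h.exists_det_ne_zero
    refine ⟨z, hz, fun hzero => ?_⟩
    have h1 : u z = (z - z₀) • fun i => u' i z := funext fun i => huu' i z
    have h2 : ((U z).updateCol j (u z)).det = c j • (U z).det := by
      rw [← Matrix.det_updateCol_sum]
      congr 2
      ext k
      simp only [u, Matrix.mulVec, dotProduct, smul_eq_mul, mul_comm]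
    rw [h1, Matrix.det_updateCol_smul, hzero, mul_zero] at h2
    exact mul_ne_zero hj hd h2.symm
  · intro z hz
    ext i k
    rw [Matrix.mul_diagonal]
    by_cases hk : k = j
    · subst hk
      have := congrFun (huv' z hz) i
      simpa [Matrix.mul_apply, Matrix.mulVec, dotProduct, mul_comm] using this
    · have := congrFun (congrFun (h.mul_eq z hz) i) k
      rw [Matrix.mul_diagonal] at this
      simpa [Matrix.mul_apply, hk] using this
  · rw [Finset.sum_update_of_mem (Finset.mem_univ j),
      ← Finset.add_sum_erase _ _ (Finset.mem_univ j), Finset.sdiff_singleton_eq_erase]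
    ring

end IsFrame

theorem IsFrame.exists_sum_le {f : ℂ → Matrix n n ℂ}
    (hf : ∀ i j, DifferentiableOn ℂ (fun z => f z i j) {(0 : ℂ)}ᶜ)
    (hunit : ∀ z : ℂ, z ≠ 0 → IsUnit (f z)) :
    ∃ B : ℤ, ∀ (a : n → ℤ) (U V : ℂ → Matrix n n ℂ), IsFrame f a U V → ∑ i, a i ≤ B := by
  obtain ⟨M, U', V', hU', hV', hU'2, hmul⟩ := exists_matrix_meromorphic_frame
    (f := fun z => (f z)⁻¹) (differentiableOn_matrix_inv hf fun z hz => hunit z hz)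
    fun z hz => Matrix.isUnit_nonsing_inv_iff.2 (hunit z hz)
  refine ⟨M * Fintype.card n, fun a U V h => not_lt.1 fun hlt => ?_⟩
  have hdU := differentiable_matrix_det h.left_differentiable
  have hdU' := differentiable_matrix_det hU'
  have hzero : ∀ z, (U z).det * (U' z).det = 0 := by
    refine eq_zero_of_entire_of_entire_inv
      ((differentiable_matrix_det h.right_differentiable).mul (differentiable_matrix_det hV'))
      (hdU.mul hdU') (sub_pos.2 hlt) fun z hz => ?_
    have h1 := h.det_eq hz
    have h2 := congrArg Matrix.det (hmul z hz)
    rw [Matrix.det_mul, Matrix.det_smul] at h2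
    have h3 : (f z).det * ((f z)⁻¹).det = 1 := by
      rw [← Matrix.det_mul, Matrix.mul_nonsing_inv _
        ((Matrix.isUnit_iff_isUnit_det _).1 (hunit z hz)), Matrix.det_one]
    have h4 : z ^ (∑ i, a i - (M * Fintype.card n : ℤ)) =
        z ^ (∑ i, a i) * (z⁻¹ ^ M) ^ Fintype.card n := by
      rw [zpow_sub₀ hz, div_eq_mul_inv, ← pow_mul, inv_pow]
      norm_cast
    simp only [Pi.mul_apply]
    rw [h4]
    linear_combination (((f z)⁻¹).det * (V' z⁻¹).det) * h1 +
      z ^ (∑ i, a i) * (U z).det * h2 - (V z⁻¹).det * (V' z⁻¹).det * h3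
  have han : ∀ {φ : ℂ → ℂ}, Differentiable ℂ φ → AnalyticOnNhd ℂ φ Set.univ :=
    fun hφ => hφ.differentiableOn.analyticOnNhd isOpen_univ
  rcases (han hdU).eq_zero_or_eq_zero_of_mul_eq_zero (han hdU') (fun z _ => hzero z)
    isPreconnected_univ with h0 | h0
  · obtain ⟨z, -, hz⟩ := h.exists_det_ne_zero
    exact hz (h0 z trivial)
  · exact ((Matrix.isUnit_iff_isUnit_det _).1 hU'2).ne_zero (h0 2 trivial)

/-- A frame of maximal total degree is invertible everywhere. -/
theorem exists_isFrame_isUnit {f : ℂ → Matrix n n ℂ}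
    (hf : ∀ i j, DifferentiableOn ℂ (fun z => f z i j) {(0 : ℂ)}ᶜ)
    (hunit : ∀ z : ℂ, z ≠ 0 → IsUnit (f z)) :
    ∃ (a : n → ℤ) (U V : ℂ → Matrix n n ℂ), IsFrame f a U V ∧
      (∀ z, IsUnit (U z)) ∧ ∀ z, IsUnit (V z) := by
  obtain ⟨B, hB⟩ := IsFrame.exists_sum_le hf hunit
  obtain ⟨M, U₀, V₀, hU₀, hV₀, hU₀2, hmul⟩ := exists_matrix_meromorphic_frame hf hunit
  have h₀ : IsFrame f (fun _ => -(M : ℤ)) U₀ V₀ := by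
    refine ⟨hU₀, hV₀, ⟨2, two_ne_zero, ((Matrix.isUnit_iff_isUnit_det _).1 hU₀2).ne_zero⟩,
      fun z hz => ?_⟩
    rw [hmul z hz, ← Matrix.smul_one_eq_diagonal, Matrix.mul_smul, mul_one]
    simp
  obtain ⟨s, ⟨a, U, V, h, rfl⟩, hmax⟩ := Int.exists_greatest_of_bdd
    (P := fun s => ∃ a U V, IsFrame f a U V ∧ ∑ i, a i = s)
    ⟨B, by rintro _ ⟨a, U, V, h, rfl⟩; exact hB a U V h⟩ ⟨_, _, _, _, h₀, rfl⟩
  have hg : ∀ i j, DifferentiableOn ℂ (fun w => (f w⁻¹)⁻¹ i j) {(0 : ℂ)}ᶜ := fun i j =>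
    (differentiableOn_matrix_inv hf (fun z hz => hunit z hz) i j).comp
      (differentiableOn_inv.mono fun w hw => hw) fun w hw => inv_ne_zero hw
  have hgunit : ∀ w : ℂ, w ≠ 0 → IsUnit (f w⁻¹)⁻¹ := fun w hw =>
    Matrix.isUnit_nonsing_inv_iff.2 (hunit _ (inv_ne_zero hw))
  refine ⟨a, U, V, h, fun z => ?_, fun w => ?_⟩
  · refine (Matrix.isUnit_iff_isUnit_det _).2 (isUnit_iff_ne_zero.2 fun h0 => ?_)
    obtain ⟨b, U', V', h', hb⟩ := h.exists_raise hf hunit h0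
    have := hmax _ ⟨b, U', V', h', rfl⟩
    omega
  · refine (Matrix.isUnit_iff_isUnit_det _).2 (isUnit_iff_ne_zero.2 fun h0 => ?_)
    obtain ⟨b, V', U', h', hb⟩ := (h.swap hunit).exists_raise hg hgunit h0
    have h'' := h'.swap hgunit
    have hfr : IsFrame f b U' V' := by
      refine ⟨h''.left_differentiable, h''.right_differentiable, h''.exists_det_ne_zero,
        fun z hz => ?_⟩
      rw [← h''.mul_eq z hz, inv_inv,
        Matrix.nonsing_inv_nonsing_inv _ ((Matrix.isUnit_iff_isUnit_det _).1 (hunit z hz))]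
    have := hmax _ ⟨b, U', V', hfr, rfl⟩
    omega

/-- `f z = g z * diag (z ^ a i) * h z⁻¹` with `g` and `h` entire and invertible. -/
structure IsBirkhoffFactorization (f : ℂ → Matrix n n ℂ) (a : n → ℤ)
    (g h : ℂ → Matrix n n ℂ) : Prop where
  left_differentiable : ∀ i j, Differentiable ℂ fun z => g z i j
  right_differentiable : ∀ i j, Differentiable ℂ fun z => h z i j
  left_isUnit : ∀ z, IsUnit (g z)
  right_isUnit : ∀ z, IsUnit (h z)
  eq_mul : ∀ z, z ≠ 0 → f z = g z * (Matrix.diagonal fun i => z ^ a i) * h z⁻¹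

theorem differentiable_matrix_inv {U : ℂ → Matrix n n ℂ}
    (hU : ∀ i j, Differentiable ℂ fun z => U z i j) (hunit : ∀ z, IsUnit (U z)) (i j : n) :
    Differentiable ℂ fun z => (U z)⁻¹ i j :=
  differentiableOn_univ.1 <| differentiableOn_matrix_inv
    (fun i j => (hU i j).differentiableOn) (fun z _ => hunit z) i j

theorem exists_isBirkhoffFactorization {f : ℂ → Matrix n n ℂ}
    (hf : ∀ i j, DifferentiableOn ℂ (fun z => f z i j) {(0 : ℂ)}ᶜ)
    (hunit : ∀ z : ℂ, z ≠ 0 → IsUnit (f z)) :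
    ∃ a g h, IsBirkhoffFactorization f a g h := by
  obtain ⟨a, U, V, h, hU, hV⟩ := exists_isFrame_isUnit hf hunit
  refine ⟨a, U, fun w => (V w)⁻¹, h.left_differentiable,
    differentiable_matrix_inv h.right_differentiable hV, hU,
    fun w => Matrix.isUnit_nonsing_inv_iff.2 (hV w), fun z hz => ?_⟩
  rw [← h.mul_eq z hz, Matrix.mul_nonsing_inv_cancel_right _ _
    ((Matrix.isUnit_iff_isUnit_det _).1 (hV _))]

theorem IsBirkhoffFactorization.reindex {f : ℂ → Matrix n n ℂ} {a : n → ℤ}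
    {g h : ℂ → Matrix n n ℂ} (H : IsBirkhoffFactorization f a g h) (σ : Equiv.Perm n) :
    IsBirkhoffFactorization f (a ∘ σ) (fun z => (g z).submatrix id σ)
      fun z => (h z).submatrix σ id where
  left_differentiable i j := H.left_differentiable i (σ j)
  right_differentiable i j := H.right_differentiable (σ i) j
  left_isUnit z := (Matrix.isUnit_submatrix_equiv (e₁ := Equiv.refl n) (e₂ := σ)).2
    (H.left_isUnit z)
  right_isUnit z := (Matrix.isUnit_submatrix_equiv (e₁ := σ) (e₂ := Equiv.refl n)).2
    (H.right_isUnit z)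
  eq_mul z hz := by
    have hd : (Matrix.diagonal fun i => z ^ (a ∘ σ) i) =
        (Matrix.diagonal fun i => z ^ a i).submatrix σ σ := by
      rw [Matrix.submatrix_diagonal_equiv]
      rfl
    rw [hd, Matrix.submatrix_mul_equiv, Matrix.submatrix_mul_equiv, Matrix.submatrix_id_id,
      H.eq_mul z hz]

/-- A homomorphism from `O(a j)` to `O(b i)` vanishes when `b i < a j`. -/
theorem IsBirkhoffFactorization.inv_mul_apply_eq_zero {f : ℂ → Matrix n n ℂ} {a b : n → ℤ}
    {g h g' h' : ℂ → Matrix n n ℂ} (H : IsBirkhoffFactorization f a g h)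
    (H' : IsBirkhoffFactorization f b g' h') {i j : n} (hij : b i < a j) (z : ℂ) :
    ((g' z)⁻¹ * g z) i j = 0 := by
  have hmulDiff : ∀ {A B : ℂ → Matrix n n ℂ}, (∀ i j, Differentiable ℂ fun z => A z i j) →
      (∀ i j, Differentiable ℂ fun z => B z i j) → Differentiable ℂ fun z => (A z * B z) i j := by
    intro A B hA hB
    simp only [Matrix.mul_apply]
    exact Differentiable.fun_sum fun k _ => (hA _ _).mul (hB _ _)
  refine eq_zero_of_entire_of_entire_inv (G := fun w => (h' w * (h w)⁻¹) i j)
    (hmulDiff H'.right_differentiable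
      (differentiable_matrix_inv H.right_differentiable H.right_isUnit))
    (hmulDiff (differentiable_matrix_inv H'.left_differentiable H'.left_isUnit)
      H.left_differentiable) (sub_pos.2 hij) (fun z hz => ?_) z
  have hg' := (Matrix.isUnit_iff_isUnit_det _).1 (H'.left_isUnit z)
  have hh := (Matrix.isUnit_iff_isUnit_det _).1 (H.right_isUnit z⁻¹)
  have h1 := (H.eq_mul z hz).symm.trans (H'.eq_mul z hz)
  have h2 : ((g' z)⁻¹ * g z) * (Matrix.diagonal fun i => z ^ a i) =
      (Matrix.diagonal fun i => z ^ b i) * (h' z⁻¹ * (h z⁻¹)⁻¹) := by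
    have h3 := congrArg (fun A => (g' z)⁻¹ * A * (h z⁻¹)⁻¹) h1
    simp only [mul_assoc, Matrix.nonsing_inv_mul_cancel_left _ _ hg',
      Matrix.mul_nonsing_inv _ hh, mul_one] at h3
    simpa only [mul_assoc] using h3
  have h3 := congrFun (congrFun h2 i) j
  rw [Matrix.mul_diagonal, Matrix.diagonal_mul] at h3
  rw [zpow_sub₀ hz, div_mul_eq_mul_div, eq_div_iff (zpow_ne_zero _ hz), mul_comm, ← h3, mul_comm]

theorem det_eq_zero_of_lower_left_block_eq_zero {r : ℕ} {R : Type*} [CommRing R]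
    {A : Matrix (Fin r) (Fin r) R} (k : Fin r) (hA : ∀ i j, j ≤ k → k ≤ i → A i j = 0) :
    A.det = 0 := by
  rw [Matrix.det_apply]
  refine Finset.sum_eq_zero fun σ _ => ?_
  obtain ⟨j, hj, hσ⟩ : ∃ j ≤ k, k ≤ σ j := by
    by_contra! hlt
    have := Finset.card_le_card_of_injOn σ
      (s := Finset.Iic k) (t := Finset.Iio k)
      (fun j hj => by simpa using hlt j (by simpa using hj)) σ.injective.injOn
    simp at this
  rw [Finset.prod_eq_zero (f := fun i => A (σ i) i) (Finset.mem_univ j) (hA _ _ hj hσ), smul_zero]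

theorem IsBirkhoffFactorization.le_of_antitone {r : ℕ} {f : ℂ → Matrix (Fin r) (Fin r) ℂ}
    {a b : Fin r → ℤ} {g h g' h' : ℂ → Matrix (Fin r) (Fin r) ℂ}
    (H : IsBirkhoffFactorization f a g h) (H' : IsBirkhoffFactorization f b g' h')
    (ha : Antitone a) (hb : Antitone b) : a ≤ b := by
  intro k
  by_contra! hk
  have hdet := det_eq_zero_of_lower_left_block_eq_zero k fun i j hj hi =>
    H.inv_mul_apply_eq_zero H' ((hb hi).trans_lt (hk.trans_le (ha hj))) 0
  exact ((Matrix.isUnit_iff_isUnit_det _).1 ((Matrix.isUnit_nonsing_inv_iff.2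
    (H'.left_isUnit 0)).mul (H.left_isUnit 0))).ne_zero hdet

theorem exists_perm_antitone {r : ℕ} (a : Fin r → ℤ) :
    ∃ σ : Equiv.Perm (Fin r), Antitone (a ∘ σ) :=
  ⟨Tuple.sort (-a), fun _ _ hij => neg_le_neg_iff.1 (Tuple.monotone_sort (-a) hij)⟩

end Matrix

/-- Grothendieck–Birkhoff. Holomorphic vector bundles on `ℂP¹` correspond to
holomorphic clutching functions `f : ℂ* → GL_r(ℂ)`; the bundle splits as
`O(a₁) ⊕ ⋯ ⊕ O(a_r)` exactly when `f` admits a Birkhoff factorization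
`f(z) = g(z) · diag(z^{a₁}, …, z^{a_r}) · h(1/z)` with `g` entire and invertible on `ℂ`
(the chart at `0`) and `h` entire and invertible on `ℂ` (the chart at `∞`).
The theorem: every holomorphic clutching function admits such a factorization, and the
decreasing sequence `a₁ ≥ ⋯ ≥ a_r` of integers is uniquely determined. -/
theorem grothendieck_birkhoff (r : ℕ) (f : ℂ → Matrix (Fin r) (Fin r) ℂ)
    (hf : ∀ i j, DifferentiableOn ℂ (fun z => f z i j) {(0 : ℂ)}ᶜ)
    (hfinv : ∀ z : ℂ, z ≠ 0 → IsUnit (f z)) :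
    ∃! a : Fin r → ℤ,
      (∀ i j : Fin r, i ≤ j → a j ≤ a i) ∧
      ∃ g h : ℂ → Matrix (Fin r) (Fin r) ℂ,
        (∀ i j, Differentiable ℂ (fun z => g z i j)) ∧
        (∀ i j, Differentiable ℂ (fun z => h z i j)) ∧
        (∀ z : ℂ, IsUnit (g z)) ∧ (∀ z : ℂ, IsUnit (h z)) ∧
        (∀ z : ℂ, z ≠ 0 →
          f z = g z * Matrix.diagonal (fun i => z ^ (a i)) * h z⁻¹) := by
  obtain ⟨a, g, h, H⟩ := exists_isBirkhoffFactorization hf hfinv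
  obtain ⟨σ, hσ⟩ := exists_perm_antitone a
  have H₁ := H.reindex σ
  refine ⟨a ∘ σ, ⟨fun i j hij => hσ hij, _, _, H₁.left_differentiable, H₁.right_differentiable,
    H₁.left_isUnit, H₁.right_isUnit, H₁.eq_mul⟩, ?_⟩
  rintro b ⟨hb, g', h', hg', hh', hgu, hhu, heq⟩
  have H₂ : IsBirkhoffFactorization f b g' h' := ⟨hg', hh', hgu, hhu, heq⟩
  have hb' : Antitone b := fun i j hij => hb i j hij
  exact le_antisymm (H₂.le_of_antitone H₁ hb' hσ) (H₁.le_of_antitone H₂ hσ hb')
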